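/- Given an architecture A, alphabet Σ, a CPDS S over (A,Σ), and k ≥ 1, one can construct a tree automaton A_S^{k-stw} such that for every valid k-STT τ whose coloring has empty domain and whose graph G_τ is a CBM over (A,Σ): τ ∈ L(A_S^{k-stw}) if and only if G_τ ∈ L(S). -/

import Mathlib

/-! ### Architectures and concurrent behaviors with matching (CBMs) -/

/-- The three kinds of data structures. -/
inductive DSKind : Type
  | stack
  | queue
  | bag
deriving DecidableEq

/-- An architecture: a finite set of processes, a finite set of data structures
(each a stack, queue, or bag), with writer and reader processes; stacks are
written and read by the same process. -/
structure Architecture where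
  Procs : Type
  DS : Type
  procsFintype : Fintype Procs
  dsFintype : Fintype DS
  procsDecEq : DecidableEq Procs
  dsDecEq : DecidableEq DS
  kind : DS → DSKind
  Writer : DS → Procs
  Reader : DS → Procs
  stack_wr : ∀ d, kind d = DSKind.stack → Writer d = Reader d

attribute [instance] Architecture.procsFintype Architecture.dsFintype
  Architecture.procsDecEq Architecture.dsDecEq

/-- Potential events: a process together with a (1-based) position. -/
abbrev Architecture.Event (A : Architecture) : Type := A.Procs × ℕ

/-- The data of a CBM: one word per process and one matching relation per
data structure (on potential events). -/
structure PreCBM (A : Architecture) (Alph : Type) where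
  word : A.Procs → List Alph
  mrel : A.DS → A.Event → A.Event → Prop

namespace PreCBM

variable {A : Architecture} {Alph : Type}

/-- `(p,i)` is an event iff `1 ≤ i ≤ |w_p|`. -/
def isEvent (M : PreCBM A Alph) (e : A.Event) : Prop :=
  1 ≤ e.2 ∧ e.2 ≤ (M.word e.1).length

/-- The set of events of `M`. -/
def events (M : PreCBM A Alph) : Set A.Event := {e | M.isEvent e}

/-- The label of event `(p,i)` is the `i`-th letter of `w_p`. -/
def label (M : PreCBM A Alph) (e : A.Event) : Option Alph :=
  (M.word e.1)[e.2 - 1]?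

/-- Process-successor relation `(p,i) → (p,i+1)`. -/
def procSucc (M : PreCBM A Alph) (e f : A.Event) : Prop :=
  M.isEvent e ∧ M.isEvent f ∧ f.1 = e.1 ∧ f.2 = e.2 + 1

/-- `e ▷ f` for some data structure. -/
def mat (M : PreCBM A Alph) (e f : A.Event) : Prop := ∃ d, M.mrel d e f

def step (M : PreCBM A Alph) (e f : A.Event) : Prop := M.procSucc e f ∨ M.mat e f

/-- The causal order `< = (→ ∪ ▷)⁺`. -/
def lt (M : PreCBM A Alph) : A.Event → A.Event → Prop := Relation.TransGen M.step

/-- An event is internal if it is not the endpoint of any matching edge. -/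
def isInternal (M : PreCBM A Alph) (e : A.Event) : Prop :=
  ¬ ∃ d f, M.mrel d e f ∨ M.mrel d f e

/-- The CBM axioms. -/
structure IsCBM (M : PreCBM A Alph) : Prop where
  mrel_valid : ∀ d e f, M.mrel d e f →
    M.isEvent e ∧ M.isEvent f ∧ e.1 = A.Writer d ∧ f.1 = A.Reader d
  disjoint : ∀ d d' e f e' f', M.mrel d e f → M.mrel d' e' f' →
    ¬ (d = d' ∧ e = e' ∧ f = f') → e ≠ e' ∧ e ≠ f' ∧ f ≠ e' ∧ f ≠ f'
  irrefl : ∀ e, ¬ M.lt e e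
  lifo : ∀ d, A.kind d = DSKind.stack → ∀ e₁ f₁ e₂ f₂,
    M.mrel d e₁ f₁ → M.mrel d e₂ f₂ → M.lt e₁ e₂ → M.lt e₂ f₁ → M.lt f₂ f₁
  fifo : ∀ d, A.kind d = DSKind.queue → ∀ e₁ f₁ e₂ f₂,
    M.mrel d e₁ f₁ → M.mrel d e₂ f₂ → M.lt e₁ e₂ → M.lt f₁ f₂

end PreCBM

/-- Concurrent behaviors with matching over `(A, Alph)`. -/
def CBM (A : Architecture) (Alph : Type) : Type := {M : PreCBM A Alph // M.IsCBM}
/-! ### Systems of concurrent processes with data structures (CPDS) -/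

/-- A CPDS over an architecture `A` and alphabet `Alph`. -/
structure CPDS (A : Architecture) (Alph : Type) where
  Locs : Type
  Val : Type
  locsFintype : Fintype Locs
  valFintype : Fintype Val
  locsNonempty : Nonempty Locs
  valNonempty : Nonempty Val
  internal : A.Procs → Locs → Alph → Locs → Prop
  write : A.Procs → Locs → Alph → A.DS → Val → Locs → Prop
  read : A.Procs → Locs → Alph → A.DS → Val → Locs → Prop
  write_writer : ∀ p ℓ a d v ℓ', write p ℓ a d v ℓ' → A.Writer d = p
  read_reader : ∀ p ℓ a d v ℓ', read p ℓ a d v ℓ' → A.Reader d = p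
  init : Locs
  finals : Set (A.Procs → Locs)

namespace CPDS

variable {A : Architecture} {Alph : Type}

/-- `ρ⁻(e)`: location before event `e` (`init` if `e` is minimal on its process). -/
def prevLoc (S : CPDS A Alph) (ρ : A.Event → S.Locs) (e : A.Event) : S.Locs :=
  if e.2 ≤ 1 then S.init else ρ (e.1, e.2 - 1)

/-- `ρ` is a run of `S` on `M` (graph semantics). -/
def IsRun (S : CPDS A Alph) (M : PreCBM A Alph) (ρ : A.Event → S.Locs) : Prop :=
  (∀ e, M.isEvent e → M.isInternal e →
    ∃ a, M.label e = some a ∧ S.internal e.1 (S.prevLoc ρ e) a (ρ e)) ∧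
  (∀ d e f, M.mrel d e f → ∃ v a b,
    M.label e = some a ∧ M.label f = some b ∧
    S.write e.1 (S.prevLoc ρ e) a d v (ρ e) ∧
    S.read f.1 (S.prevLoc ρ f) b d v (ρ f))

/-- Location of the last event of process `p` (`init` if it has no event). -/
def lastLoc (S : CPDS A Alph) (M : PreCBM A Alph) (ρ : A.Event → S.Locs)
    (p : A.Procs) : S.Locs :=
  if (M.word p).length = 0 then S.init else ρ (p, (M.word p).length)

/-- `S` accepts `M`: some run reaching a global final location tuple. -/
def AcceptsPre (S : CPDS A Alph) (M : PreCBM A Alph) : Prop :=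
  ∃ ρ : A.Event → S.Locs, S.IsRun M ρ ∧ (fun p => S.lastLoc M ρ p) ∈ S.finals

/-- The graph-semantics language `L(S) ⊆ CBM(A,Alph)`. -/
def lang (S : CPDS A Alph) : Set (CBM A Alph) := {M | S.AcceptsPre M.1}

end CPDS
/-! ### Monadic second-order logic over vertex- and edge-labeled structures -/

/-- MSO formulas over structures with vertex labels `Vl` and binary relations
indexed by `El`.  First-order variables and set variables are indexed by `ℕ`. -/
inductive GMSO (Vl El : Type) : Type
  | lab (a : Vl) (x : ℕ)
  | edge (γ : El) (x y : ℕ)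
  | eq (x y : ℕ)
  | mem (x X : ℕ)
  | or (φ ψ : GMSO Vl El)
  | not (φ : GMSO Vl El)
  | exFO (x : ℕ) (φ : GMSO Vl El)
  | exSO (X : ℕ) (φ : GMSO Vl El)

namespace GMSO

variable {Vl El : Type} {V : Type}

/-- Satisfaction of an MSO formula in a structure with domain `dom`, labeling
relation `lab` and edge relations `edge`, under valuations `ν` (first-order,
partial) and `μ` (second-order). -/
def Sat (dom : Set V) (lab : V → Vl → Prop) (edge : El → V → V → Prop) :
    (ℕ → Option V) → (ℕ → Set V) → GMSO Vl El → Prop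
  | ν, _, .lab a x => ∃ v, ν x = some v ∧ v ∈ dom ∧ lab v a
  | ν, _, .edge γ x y => ∃ u v, ν x = some u ∧ ν y = some v ∧ edge γ u v
  | ν, _, .eq x y => ∃ v, ν x = some v ∧ ν y = some v
  | ν, μ, .mem x X => ∃ v, ν x = some v ∧ v ∈ μ X
  | ν, μ, .or φ ψ => Sat dom lab edge ν μ φ ∨ Sat dom lab edge ν μ ψ
  | ν, μ, .not φ => ¬ Sat dom lab edge ν μ φ
  | ν, μ, .exFO x φ => ∃ v ∈ dom, Sat dom lab edge (Function.update ν x (some v)) μ φ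
  | ν, μ, .exSO X φ => ∃ E : Set V, E ⊆ dom ∧ Sat dom lab edge ν (Function.update μ X E) φ

/-- Free first-order variables. -/
def freeFO : GMSO Vl El → Set ℕ
  | .lab _ x => {x}
  | .edge _ x y => {x, y}
  | .eq x y => {x, y}
  | .mem x _ => {x}
  | .or φ ψ => freeFO φ ∪ freeFO ψ
  | .not φ => freeFO φ
  | .exFO x φ => freeFO φ \ {x}
  | .exSO _ φ => freeFO φ

/-- Free second-order variables. -/
def freeSO : GMSO Vl El → Set ℕ
  | .lab _ _ => ∅
  | .edge _ _ _ => ∅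
  | .eq _ _ => ∅
  | .mem _ X => {X}
  | .or φ ψ => freeSO φ ∪ freeSO ψ
  | .not φ => freeSO φ
  | .exFO _ φ => freeSO φ
  | .exSO X φ => freeSO φ \ {X}

/-- A sentence is a formula without free variables. -/
def Closed (φ : GMSO Vl El) : Prop := freeFO φ = ∅ ∧ freeSO φ = ∅

/-- Satisfaction of a sentence (valuations are irrelevant for sentences). -/
def Models (dom : Set V) (lab : V → Vl → Prop) (edge : El → V → V → Prop)
    (φ : GMSO Vl El) : Prop :=
  Sat dom lab edge (fun _ => none) (fun _ => ∅) φ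

/-- First-order formulas: no second-order quantification. -/
def FirstOrder : GMSO Vl El → Prop
  | .or φ ψ => FirstOrder φ ∧ FirstOrder ψ
  | .not φ => FirstOrder φ
  | .exFO _ φ => FirstOrder φ
  | .exSO _ _ => False
  | _ => True

/-- EMSO formulas: a block of existential second-order quantifiers followed by a
first-order formula. -/
inductive IsEMSO : GMSO Vl El → Prop
  | fo {φ : GMSO Vl El} : FirstOrder φ → IsEMSO φ
  | ex {X : ℕ} {φ : GMSO Vl El} : IsEMSO φ → IsEMSO (.exSO X φ)

end GMSO
/-! ### Labeled binary trees (with unary nodes) and MSO over them -/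

/-- Λ-labeled trees in which every node has 0, 1, or 2 children. -/
inductive BTree (Λ : Type) : Type
  | leaf (l : Λ)
  | unary (l : Λ) (t : BTree Λ)
  | binary (l : Λ) (t₁ t₂ : BTree Λ)

namespace BTree

variable {Λ : Type}

/-- The label at a position (a path from the root; `false` = child 0,
`true` = child 1), if the position exists. -/
def labelAt : BTree Λ → List Bool → Option Λ
  | .leaf l, [] => some l
  | .unary l _, [] => some l
  | .binary l _ _, [] => some l
  | .unary _ t, false :: p => t.labelAt p
  | .binary _ t₁ _, false :: p => t₁.labelAt p
  | .binary _ _ t₂, true :: p => t₂.labelAt p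
  | _, _ => none

/-- The set of node positions of a tree. -/
def positions (t : BTree Λ) : Set (List Bool) := {p | (t.labelAt p).isSome}

/-- The `b`-child relation (`b = false`: child 0, `b = true`: child 1). -/
def childRel (t : BTree Λ) (b : Bool) (p q : List Bool) : Prop :=
  q = p ++ [b] ∧ q ∈ t.positions

/-- Satisfaction of an MSO sentence over the tree (atoms: labels, `↓0`, `↓1`). -/
def TSat (t : BTree Λ) (φ : GMSO Λ Bool) : Prop :=
  GMSO.Models t.positions (fun p l => t.labelAt p = some l) t.childRel φ

end BTree
/-! ### Special tree terms (STTs) and their graph semantics -/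

/-- Special tree terms over vertex labels `Vl` and edge labels `El`,
with colors in `ℕ`. -/
inductive STT (Vl El : Type) : Type
  | atom (i : ℕ) (a : Vl)
  | add (γ : El) (i j : ℕ) (τ : STT Vl El)
  | forget (i : ℕ) (τ : STT Vl El)
  | plus (τ₁ τ₂ : STT Vl El)

namespace STT

variable {Vl El : Type}

/-- The active colors of a term. -/
def activeColors : STT Vl El → Set ℕ
  | .atom i _ => {i}
  | .add _ _ _ τ => τ.activeColors
  | .forget i τ => τ.activeColors \ {i}
  | .plus τ₁ τ₂ => τ₁.activeColors ∪ τ₂.activeColors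

/-- Valid `k`-STTs: colors in `[k] = {1,…,k}`, and the two arguments of `⊕`
have disjoint sets of active colors. -/
def Valid (k : ℕ) : STT Vl El → Prop
  | .atom i _ => 1 ≤ i ∧ i ≤ k
  | .add _ i j τ => 1 ≤ i ∧ i ≤ k ∧ 1 ≤ j ∧ j ≤ k ∧ τ.Valid k
  | .forget i τ => 1 ≤ i ∧ i ≤ k ∧ τ.Valid k
  | .plus τ₁ τ₂ => τ₁.Valid k ∧ τ₂.Valid k ∧ Disjoint τ₁.activeColors τ₂.activeColors

/-- The (partial, injective) coloring `χ_τ`, mapping a color to the position of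
the vertex currently carrying it.  Vertices are identified with the positions
of the atoms in the term (`false` = unique/left child, `true` = right child). -/
def chi : STT Vl El → ℕ → Option (List Bool)
  | .atom i _, j => if j = i then some [] else none
  | .add _ _ _ τ, j => (τ.chi j).map (false :: ·)
  | .forget i τ, j => if j = i then none else (τ.chi j).map (false :: ·)
  | .plus τ₁ τ₂, j =>
      match τ₁.chi j with
      | some p => some (false :: p)
      | none => (τ₂.chi j).map (true :: ·)

/-- The label of a vertex (i.e., of an atom position) of `G_τ`. -/
def vlabel : STT Vl El → List Bool → Option Vl
  | .atom _ a, [] => some a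
  | .add _ _ _ τ, false :: p => τ.vlabel p
  | .forget _ τ, false :: p => τ.vlabel p
  | .plus τ₁ _, false :: p => τ₁.vlabel p
  | .plus _ τ₂, true :: p => τ₂.vlabel p
  | _, _ => none

/-- The vertex set of `G_τ`. -/
def vertices (τ : STT Vl El) : Set (List Bool) := {p | (τ.vlabel p).isSome}

/-- The `γ`-labeled edge relation of `G_τ`. -/
def edgeRel : STT Vl El → El → List Bool → List Bool → Prop
  | .atom _ _, _, _, _ => False
  | .add γ' i j τ, γ, u, v =>
      (∃ u' v', u = false :: u' ∧ v = false :: v' ∧ τ.edgeRel γ u' v') ∨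
      (γ = γ' ∧ ∃ pu pv, τ.chi i = some pu ∧ τ.chi j = some pv ∧
        u = false :: pu ∧ v = false :: pv)
  | .forget _ τ, γ, u, v => ∃ u' v', u = false :: u' ∧ v = false :: v' ∧ τ.edgeRel γ u' v'
  | .plus τ₁ τ₂, γ, u, v =>
      (∃ u' v', u = false :: u' ∧ v = false :: v' ∧ τ₁.edgeRel γ u' v') ∨
      (∃ u' v', u = true :: u' ∧ v = true :: v' ∧ τ₂.edgeRel γ u' v')

/-- `G_τ` is acyclic: the union of all edge relations has an irreflexive
transitive closure. -/
def Acyclic (τ : STT Vl El) : Prop :=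
  ∀ p, ¬ Relation.TransGen (fun u v => ∃ γ, τ.edgeRel γ u v) p p

/-- Satisfaction of a graph-MSO sentence in the graph `G_τ`. -/
def graphSat (τ : STT Vl El) (φ : GMSO Vl El) : Prop :=
  GMSO.Models τ.vertices (fun p a => τ.vlabel p = some a) τ.edgeRel φ

end STT

/-- The label alphabet `Λ^k` of `k`-STTs, seen as labeled binary trees. -/
inductive STTLabel (Vl El : Type) : Type
  | atom (i : ℕ) (a : Vl)
  | add (γ : El) (i j : ℕ)
  | forget (i : ℕ)
  | plus

/-- The binary tree underlying a special tree term. -/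
def STT.toTree {Vl El : Type} : STT Vl El → BTree (STTLabel Vl El)
  | .atom i a => .leaf (.atom i a)
  | .add γ i j τ => .unary (.add γ i j) τ.toTree
  | .forget i τ => .unary (.forget i) τ.toTree
  | .plus τ₁ τ₂ => .binary .plus τ₁.toTree τ₂.toTree
/-! ### Bottom-up tree automata -/

/-- A (nondeterministic) bottom-up tree automaton over `Λ`-labeled trees with
nodes of arity 0, 1 or 2. -/
structure BUTA (Λ : Type) where
  State : Type
  stFintype : Fintype State
  leafT : Λ → State → Prop
  unaryT : Λ → State → State → Prop
  binaryT : Λ → State → State → State → Prop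
  accept : State → Prop

namespace BUTA

variable {Λ : Type}

/-- Bottom-up runs: the state assigned at the root of the given tree. -/
inductive Runs (Aut : BUTA Λ) : BTree Λ → Aut.State → Prop
  | leaf {l s} : Aut.leafT l s → Runs Aut (.leaf l) s
  | unary {l t s' s} : Aut.unaryT l s' s → Runs Aut t s' → Runs Aut (.unary l t) s
  | binary {l t₁ t₂ s₁ s₂ s} : Aut.binaryT l s₁ s₂ s →
      Runs Aut t₁ s₁ → Runs Aut t₂ s₂ → Runs Aut (.binary l t₁ t₂) s

/-- Acceptance: some run reaching an accepting state at the root. -/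
def Accepts (Aut : BUTA Λ) (t : BTree Λ) : Prop := ∃ s, Aut.Runs t s ∧ Aut.accept s

/-- Determinism: the transition relations are partial functions. -/
def Deterministic (Aut : BUTA Λ) : Prop :=
  (∀ l s s', Aut.leafT l s → Aut.leafT l s' → s = s') ∧
  (∀ l s₀ s s', Aut.unaryT l s₀ s → Aut.unaryT l s₀ s' → s = s') ∧
  (∀ l s₁ s₂ s s', Aut.binaryT l s₁ s₂ s → Aut.binaryT l s₁ s₂ s' → s = s')

/-- The number of states. -/
noncomputable def card (Aut : BUTA Λ) : ℕ := @Fintype.card Aut.State Aut.stFintype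

end BUTA
/-! ### CBMs as labeled graphs -/

/-- A structure with domain `dom`, vertex labels in `Alph × Procs` (letter and
process) and edge relations labeled by `{→} ∪ DS` (`none` = process successor)
is a CBM over `(A, Alph)`. -/
def IsCBMGraph (A : Architecture) (Alph : Type) {V : Type}
    (dom : Set V) (lab : V → Option (Alph × A.Procs))
    (edge : Option A.DS → V → V → Prop) : Prop :=
  -- every vertex of the domain is labeled
  (∀ v ∈ dom, ∃ x, lab v = some x) ∧
  -- edges connect vertices of the domain
  (∀ γ u v, edge γ u v → u ∈ dom ∧ v ∈ dom) ∧
  -- on each process, the →-edges form the successor relation of a linear order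
  (∀ p : A.Procs, ∃ l : List V, l.Nodup ∧
    (∀ v, v ∈ l ↔ v ∈ dom ∧ ∃ a, lab v = some (a, p)) ∧
    (∀ u v, u ∈ l → v ∈ l →
      (edge none u v ↔ ∃ n, l[n]? = some u ∧ l[n + 1]? = some v))) ∧
  -- →-edges connect events of the same process
  (∀ u v, edge none u v → ∃ a b p, lab u = some (a, p) ∧ lab v = some (b, p)) ∧
  -- d-edges go from a Writer(d)-event to a Reader(d)-event
  (∀ d u v, edge (some d) u v →
    ∃ a b, lab u = some (a, A.Writer d) ∧ lab v = some (b, A.Reader d)) ∧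
  -- distinct matching edges are pairwise disjoint
  (∀ d₁ d₂ u₁ v₁ u₂ v₂, edge (some d₁) u₁ v₁ → edge (some d₂) u₂ v₂ →
    ¬ (d₁ = d₂ ∧ u₁ = u₂ ∧ v₁ = v₂) → u₁ ≠ u₂ ∧ u₁ ≠ v₂ ∧ v₁ ≠ u₂ ∧ v₁ ≠ v₂) ∧
  -- the transitive closure of the union of all edges is a strict partial order
  (∀ v, ¬ Relation.TransGen (fun u w => ∃ γ, edge γ u w) v v) ∧
  -- LIFO for stacks
  (∀ d, A.kind d = DSKind.stack → ∀ e₁ f₁ e₂ f₂,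
    edge (some d) e₁ f₁ → edge (some d) e₂ f₂ →
    Relation.TransGen (fun u w => ∃ γ, edge γ u w) e₁ e₂ →
    Relation.TransGen (fun u w => ∃ γ, edge γ u w) e₂ f₁ →
    Relation.TransGen (fun u w => ∃ γ, edge γ u w) f₂ f₁) ∧
  -- FIFO for queues
  (∀ d, A.kind d = DSKind.queue → ∀ e₁ f₁ e₂ f₂,
    edge (some d) e₁ f₁ → edge (some d) e₂ f₂ →
    Relation.TransGen (fun u w => ∃ γ, edge γ u w) e₁ e₂ →
    Relation.TransGen (fun u w => ∃ γ, edge γ u w) f₁ f₂)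
/-! ### CPDS acceptance of CBMs presented as labeled graphs -/

namespace CPDS

variable {A : Architecture} {Alph : Type} {V : Type}

/-- `ℓ` is the location before vertex `v`: the location at its `→`-predecessor,
or the initial location if there is none. -/
def GraphPrev (S : CPDS A Alph) (dom : Set V) (edge : Option A.DS → V → V → Prop)
    (ρ : V → S.Locs) (v : V) (ℓ : S.Locs) : Prop :=
  (∃ u, u ∈ dom ∧ edge none u v ∧ ℓ = ρ u) ∨
  ((¬ ∃ u, u ∈ dom ∧ edge none u v) ∧ ℓ = S.init)

/-- The CPDS `S` accepts the CBM presented as a labeled graph: there is a run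
(assignment of locations to vertices consistent with the transitions) whose
tuple of last locations per process is a global final state. -/
def GraphAccepts (S : CPDS A Alph) (dom : Set V)
    (lab : V → Option (Alph × A.Procs)) (edge : Option A.DS → V → V → Prop) : Prop :=
  ∃ ρ : V → S.Locs,
    (∀ v ∈ dom, (¬ ∃ d w, edge (some d) v w ∨ edge (some d) w v) →
      ∃ a p ℓ, lab v = some (a, p) ∧ S.GraphPrev dom edge ρ v ℓ ∧
        S.internal p ℓ a (ρ v)) ∧
    (∀ d u v, edge (some d) u v →
      ∃ val a b ℓu ℓv, lab u = some (a, A.Writer d) ∧ lab v = some (b, A.Reader d) ∧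
        S.GraphPrev dom edge ρ u ℓu ∧ S.GraphPrev dom edge ρ v ℓv ∧
        S.write (A.Writer d) ℓu a d val (ρ u) ∧ S.read (A.Reader d) ℓv b d val (ρ v)) ∧
    (∃ fin ∈ S.finals, ∀ p : A.Procs,
      ((¬ ∃ v ∈ dom, ∃ a, lab v = some (a, p)) → fin p = S.init) ∧
      (∀ v ∈ dom, (∃ a, lab v = some (a, p)) → (¬ ∃ w ∈ dom, edge none v w) →
        fin p = ρ v))

end CPDS

/-!
A run of a CPDS is a guess of one transition per event, and correctness of the guess is local: the
source of a transition is the target of its process predecessor (or the initial location), matched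
write and read transitions exchange the same value, and an event takes an internal transition iff
it is unmatched. So the automaton guesses at each atom a transition reading the letter there, and
keeps a finite summary of the annotated graph built so far: for each color the guess at the vertex
carrying it and the labels of the edges leaving and entering it, the set of these data for the
vertices already forgotten, and the set of triples (edge label, guess at source, guess at target).
A vertex that has lost its color never gets a new edge, hence the summary of a term is determined by
the summaries of its immediate subterms, and acceptance by the CPDS can be read off the final
summary.
-/

section Types

variable {El Ann V : Type}

/-- The type of a vertex in an edge-labeled graph whose vertices carry annotations in `Ann`: its
annotation and the sets of labels of the edges leaving and entering it. -/
@[ext]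
structure VertexType (El Ann : Type) : Type where
  ann : Ann
  out : Set El
  inc : Set El
deriving Fintype

/-- The type of the vertex `v` under the annotation `α`. -/
def vertexType (edge : El → V → V → Prop) (α : V → Ann) (v : V) : VertexType El Ann :=
  ⟨α v, {γ | ∃ w, edge γ v w}, {γ | ∃ w, edge γ w v}⟩

/-- The edges of an annotated graph, up to replacing each end by its annotation. -/
def edgeTypes (edge : El → V → V → Prop) (α : V → Ann) : Set (El × Ann × Ann) :=
  {e | ∃ u v, edge e.1 u v ∧ α u = e.2.1 ∧ α v = e.2.2}

theorem mk_mem_edgeTypes {edge : El → V → V → Prop} (α : V → Ann) {γ : El} {u v : V}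
    (h : edge γ u v) : (γ, α u, α v) ∈ edgeTypes edge α :=
  ⟨u, v, h, rfl, rfl⟩

end Types

/-! ### The graph of a special tree term -/

namespace STT

variable {Vl El Ann : Type} {k : ℕ} {τ τ₁ τ₂ : STT Vl El}

theorem chi_atom_eq_some {c i : ℕ} {a : Vl} {v : List Bool} :
    (atom c a : STT Vl El).chi i = some v ↔ i = c ∧ v = [] := by
  grind [chi]

theorem chi_add_eq_some {γ : El} {c d i : ℕ} {v : List Bool} :
    (add γ c d τ).chi i = some v ↔ ∃ w, τ.chi i = some w ∧ v = false :: w := by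
  simp [chi, eq_comm]

theorem chi_forget_eq_some {c i : ℕ} {v : List Bool} :
    (forget c τ).chi i = some v ↔ i ≠ c ∧ ∃ w, τ.chi i = some w ∧ v = false :: w := by
  simp [chi, eq_comm]

theorem chi_plus_eq_some {i : ℕ} {v : List Bool} :
    (plus τ₁ τ₂).chi i = some v ↔ (∃ w, τ₁.chi i = some w ∧ v = false :: w) ∨
      (τ₁.chi i = none ∧ ∃ w, τ₂.chi i = some w ∧ v = true :: w) := by
  rw [chi]
  cases τ₁.chi i <;> simp [eq_comm]

theorem chi_inj {i j : ℕ} {v : List Bool} (hi : τ.chi i = some v) (hj : τ.chi j = some v) :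
    i = j := by
  induction τ generalizing v with
  | atom c a => grind [chi_atom_eq_some]
  | add γ c d τ ih => grind [chi_add_eq_some]
  | forget c τ ih => grind [chi_forget_eq_some]
  | plus τ₁ τ₂ ih₁ ih₂ => grind [chi_plus_eq_some]

theorem mem_activeColors_of_chi {i : ℕ} {v : List Bool} (h : τ.chi i = some v) :
    i ∈ τ.activeColors := by
  induction τ generalizing v with
  | atom c a => exact (chi_atom_eq_some.1 h).1
  | add γ c d τ ih =>
    obtain ⟨w, hw, -⟩ := chi_add_eq_some.1 h
    exact ih hw
  | forget c τ ih =>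
    obtain ⟨hic, w, hw, -⟩ := chi_forget_eq_some.1 h
    exact ⟨ih hw, hic⟩
  | plus τ₁ τ₂ ih₁ ih₂ =>
    obtain ⟨w, hw, -⟩ | ⟨-, w, hw, -⟩ := chi_plus_eq_some.1 h
    · exact .inl (ih₁ hw)
    · exact .inr (ih₂ hw)

theorem vertices_atom (i : ℕ) (a : Vl) : (atom i a : STT Vl El).vertices = {[]} := by
  ext v
  cases v <;> simp [vertices, vlabel]

theorem vertices_add (γ : El) (i j : ℕ) :
    (add γ i j τ).vertices = (false :: ·) '' τ.vertices := by
  ext v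
  rcases v with _ | ⟨_ | _, v⟩ <;> simp [vertices, vlabel]

theorem vertices_forget (i : ℕ) : (forget i τ).vertices = (false :: ·) '' τ.vertices := by
  ext v
  rcases v with _ | ⟨_ | _, v⟩ <;> simp [vertices, vlabel]

theorem vertices_plus :
    (plus τ₁ τ₂).vertices = (false :: ·) '' τ₁.vertices ∪ (true :: ·) '' τ₂.vertices := by
  ext v
  rcases v with _ | ⟨_ | _, v⟩ <;> simp [vertices, vlabel]

theorem vertices_nonempty (τ : STT Vl El) : τ.vertices.Nonempty := by
  induction τ with
  | atom i a => simp [vertices_atom]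
  | add γ i j τ ih => simpa [vertices_add] using ih
  | forget i τ ih => simpa [vertices_forget] using ih
  | plus τ₁ τ₂ ih₁ _ => simpa [vertices_plus] using .inl ih₁

theorem mem_vertices_of_chi {i : ℕ} {v : List Bool} (h : τ.chi i = some v) : v ∈ τ.vertices := by
  induction τ generalizing v with
  | atom c a => grind [chi_atom_eq_some, vertices_atom]
  | add γ c d τ ih => grind [chi_add_eq_some, vertices_add]
  | forget c τ ih => grind [chi_forget_eq_some, vertices_forget]
  | plus τ₁ τ₂ ih₁ ih₂ => grind [chi_plus_eq_some, vertices_plus]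

theorem mem_vertices_of_edgeRel {γ : El} {u v : List Bool} (h : τ.edgeRel γ u v) :
    u ∈ τ.vertices ∧ v ∈ τ.vertices := by
  induction τ generalizing u v with
  | atom c a => exact h.elim
  | add γ' c d τ ih => grind [edgeRel, vertices_add, mem_vertices_of_chi]
  | forget c τ ih => grind [edgeRel, vertices_forget]
  | plus τ₁ τ₂ ih₁ ih₂ => grind [edgeRel, vertices_plus]

/-- The vertices of `G_τ` carrying none of the colors `0, …, k`. -/
def uncoloredVertices (k : ℕ) (τ : STT Vl El) : Set (List Bool) :=
  {v ∈ τ.vertices | ∀ i : Fin (k + 1), τ.chi i ≠ some v}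

theorem uncoloredVertices_atom (i : Fin (k + 1)) (a : Vl) :
    uncoloredVertices k (atom i a : STT Vl El) = ∅ := by
  simp [uncoloredVertices, vertices_atom, Set.eq_empty_iff_forall_notMem, chi]

theorem uncoloredVertices_add (γ : El) (i j : ℕ) :
    uncoloredVertices k (add γ i j τ) = (false :: ·) '' uncoloredVertices k τ := by
  ext v
  simp only [uncoloredVertices, vertices_add, ne_eq, chi_add_eq_some, Set.mem_image,
    Set.mem_ofPred_eq]
  grind

theorem uncoloredVertices_forget (i : Fin (k + 1)) :
    uncoloredVertices k (forget i τ) =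
      (false :: ·) '' (uncoloredVertices k τ ∪ {v | τ.chi i = some v}) := by
  ext v
  simp only [uncoloredVertices, vertices_forget, ne_eq, chi_forget_eq_some, Set.mem_image,
    Set.mem_union, Set.mem_ofPred_eq]
  grind [chi_inj, mem_vertices_of_chi]

theorem chi_plus_eq_some_false_cons {i : ℕ} {v : List Bool} :
    (plus τ₁ τ₂).chi i = some (false :: v) ↔ τ₁.chi i = some v := by
  simp [chi_plus_eq_some]

theorem chi_plus_eq_some_true_cons (hd : Disjoint τ₁.activeColors τ₂.activeColors) {i : ℕ}
    {v : List Bool} : (plus τ₁ τ₂).chi i = some (true :: v) ↔ τ₂.chi i = some v := by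
  have not_both : ∀ u, τ₁.chi i = some u → τ₂.chi i ≠ some v := fun u hu hv =>
    Set.disjoint_left.1 hd (mem_activeColors_of_chi hu) (mem_activeColors_of_chi hv)
  suffices τ₂.chi i = some v → τ₁.chi i = none by simpa [chi_plus_eq_some] using this
  exact fun hv => Option.eq_none_iff_forall_ne_some.2 fun u hu => not_both u hu hv

theorem uncoloredVertices_plus (hd : Disjoint τ₁.activeColors τ₂.activeColors) :
    uncoloredVertices k (plus τ₁ τ₂) =
      (false :: ·) '' uncoloredVertices k τ₁ ∪ (true :: ·) '' uncoloredVertices k τ₂ := by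
  ext v
  rcases v with _ | ⟨_ | _, v⟩ <;>
    simp [uncoloredVertices, vertices_plus, chi_plus_eq_some_false_cons,
      chi_plus_eq_some_true_cons hd]

theorem vertexType_add (γ : El) (i j : ℕ) (α : List Bool → Ann) (v : List Bool) :
    vertexType (add γ i j τ).edgeRel α (false :: v) =
      ⟨α (false :: v),
        {γ' | ∃ w, τ.edgeRel γ' v w} ∪ {γ' | γ' = γ ∧ τ.chi i = some v ∧ (τ.chi j).isSome},
        {γ' | ∃ w, τ.edgeRel γ' w v} ∪ {γ' | γ' = γ ∧ τ.chi j = some v ∧ (τ.chi i).isSome}⟩ := by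
  ext γ'
  · rfl
  · simp only [vertexType, edgeRel, Option.isSome_iff_exists, Set.mem_union, Set.mem_ofPred_eq]
    grind
  · simp only [vertexType, edgeRel, Option.isSome_iff_exists, Set.mem_union, Set.mem_ofPred_eq]
    grind

theorem vertexType_add_of_mem_uncoloredVertices (γ : El) (i j : Fin (k + 1)) (α : List Bool → Ann)
    {v : List Bool} (hv : v ∈ uncoloredVertices k τ) :
    vertexType (add γ i j τ).edgeRel α (false :: v) =
      vertexType τ.edgeRel (fun p => α (false :: p)) v := by
  rw [vertexType_add]
  simp [hv.2 i, hv.2 j, vertexType]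

theorem vertexType_forget (i : ℕ) (α : List Bool → Ann) (v : List Bool) :
    vertexType (forget i τ).edgeRel α (false :: v) =
      vertexType τ.edgeRel (fun p => α (false :: p)) v := by
  simp [vertexType, edgeRel]

theorem vertexType_plus_false_cons (α : List Bool → Ann) (v : List Bool) :
    vertexType (plus τ₁ τ₂).edgeRel α (false :: v) =
      vertexType τ₁.edgeRel (fun p => α (false :: p)) v := by
  simp [vertexType, edgeRel]

theorem vertexType_plus_true_cons (α : List Bool → Ann) (v : List Bool) :
    vertexType (plus τ₁ τ₂).edgeRel α (true :: v) =
      vertexType τ₂.edgeRel (fun p => α (true :: p)) v := by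
  simp [vertexType, edgeRel]

theorem edgeTypes_add (γ : El) (i j : ℕ) (α : List Bool → Ann) :
    edgeTypes (add γ i j τ).edgeRel α = edgeTypes τ.edgeRel (fun p => α (false :: p)) ∪
      {e | ∃ u v, τ.chi i = some u ∧ τ.chi j = some v ∧
        e = (γ, α (false :: u), α (false :: v))} := by
  ext ⟨γ', x, y⟩
  simp only [edgeTypes, edgeRel, Set.mem_ofPred_eq, Set.mem_union]
  grind

theorem edgeTypes_forget (i : ℕ) (α : List Bool → Ann) :
    edgeTypes (forget i τ).edgeRel α = edgeTypes τ.edgeRel (fun p => α (false :: p)) := by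
  ext ⟨γ', x, y⟩
  simp only [edgeTypes, edgeRel, Set.mem_ofPred_eq]
  grind

theorem edgeTypes_plus (α : List Bool → Ann) :
    edgeTypes (plus τ₁ τ₂).edgeRel α =
      edgeTypes τ₁.edgeRel (fun p => α (false :: p)) ∪
        edgeTypes τ₂.edgeRel (fun p => α (true :: p)) := by
  ext ⟨γ', x, y⟩
  simp only [edgeTypes, edgeRel, Set.mem_ofPred_eq, Set.mem_union]
  grind

end STT

/-! ### Summaries of annotated terms -/

/-- The information on an annotated `k`-STT kept by the automaton: the type of the vertex carrying
each color, the set of types of the uncolored vertices, and the edge types. The color `0` is never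
active in a valid term; it is allowed so that colors need no shift. -/
@[ext]
structure Summary (El Ann : Type) (k : ℕ) : Type where
  colored : Fin (k + 1) → Option (VertexType El Ann)
  uncolored : Set (VertexType El Ann)
  edges : Set (El × Ann × Ann)
deriving Fintype

namespace Summary

variable {El Ann : Type} {k : ℕ}

/-- The set of types of all vertices, colored or not. -/
def vertexTypes (s : Summary El Ann k) : Set (VertexType El Ann) :=
  s.uncolored ∪ {t | ∃ i, s.colored i = some t}

/-- The effect on summaries of creating a vertex of color `i` annotated by `x`. -/
def atom (i : Fin (k + 1)) (x : Ann) : Summary El Ann k where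
  colored m := if m = i then some ⟨x, ∅, ∅⟩ else none
  uncolored := ∅
  edges := ∅

/-- The effect on summaries of `Add^γ_{i,j}`. No edge is added if `i` or `j` is inactive. -/
def add (γ : El) (i j : Fin (k + 1)) (s : Summary El Ann k) : Summary El Ann k where
  colored m := (s.colored m).map fun t =>
    ⟨t.ann, t.out ∪ {γ' | γ' = γ ∧ m = i ∧ (s.colored j).isSome},
      t.inc ∪ {γ' | γ' = γ ∧ m = j ∧ (s.colored i).isSome}⟩
  uncolored := s.uncolored
  edges := s.edges ∪
    {e | ∃ t t', s.colored i = some t ∧ s.colored j = some t' ∧ e = (γ, t.ann, t'.ann)}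

/-- The effect on summaries of `Forget_i`. -/
def forget (i : Fin (k + 1)) (s : Summary El Ann k) : Summary El Ann k where
  colored m := if m = i then none else s.colored m
  uncolored := s.uncolored ∪ {t | s.colored i = some t}
  edges := s.edges

/-- The effect on summaries of `⊕`. -/
def plus (s₁ s₂ : Summary El Ann k) : Summary El Ann k where
  colored m := (s₁.colored m).or (s₂.colored m)
  uncolored := s₁.uncolored ∪ s₂.uncolored
  edges := s₁.edges ∪ s₂.edges

end Summary

namespace STT

variable {Vl El Ann : Type} {k : ℕ} {τ τ₁ τ₂ : STT Vl El}

/-- The summary of `τ` with its vertices annotated by `α`. -/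
def summary (k : ℕ) (τ : STT Vl El) (α : List Bool → Ann) : Summary El Ann k where
  colored i := (τ.chi i).map (vertexType τ.edgeRel α)
  uncolored := vertexType τ.edgeRel α '' uncoloredVertices k τ
  edges := edgeTypes τ.edgeRel α

theorem vertexTypes_summary (α : List Bool → Ann) :
    (τ.summary k α).vertexTypes = vertexType τ.edgeRel α '' τ.vertices := by
  ext t
  simp only [Summary.vertexTypes, summary, uncoloredVertices, Option.map_eq_some_iff,
    Set.mem_union, Set.mem_image, Set.mem_ofPred_eq]
  grind [mem_vertices_of_chi]

theorem summary_atom (i : Fin (k + 1)) (a : Vl) (α : List Bool → Ann) :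
    (atom i a : STT Vl El).summary k α = Summary.atom i (α []) := by
  ext1
  · funext m
    simp only [summary, Summary.atom, chi, Fin.ext_iff]
    split_ifs <;> simp [vertexType, edgeRel]
  · simp [summary, Summary.atom, uncoloredVertices_atom]
  · simp [summary, Summary.atom, edgeTypes, edgeRel]

theorem colored_summary_add (γ : El) (i j m : Fin (k + 1)) (α : List Bool → Ann) :
    ((add γ i j τ).summary k α).colored m =
      (Summary.add γ i j (τ.summary k fun p => α (false :: p))).colored m := by
  cases hm : τ.chi m with
  | none => simp [summary, Summary.add, chi, hm]
  | some v =>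
    have chi_eq_iff (n : Fin (k + 1)) : τ.chi n = some v ↔ m = n :=
      ⟨fun hn => Fin.ext (chi_inj hm hn), fun h => h ▸ hm⟩
    simp only [summary, Summary.add, chi, hm, Option.map_some, Option.isSome_map, vertexType_add,
      chi_eq_iff]
    rfl

theorem summary_add (γ : El) (i j : Fin (k + 1)) (α : List Bool → Ann) :
    (add γ i j τ).summary k α = Summary.add γ i j (τ.summary k fun p => α (false :: p)) := by
  ext1
  · exact funext fun m => colored_summary_add γ i j m α
  · simp only [summary, Summary.add, uncoloredVertices_add, Set.image_image]
    exact Set.image_congr fun v hv => vertexType_add_of_mem_uncoloredVertices γ i j α hv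
  · simp only [summary, Summary.add, edgeTypes_add, Option.map_eq_some_iff]
    congr! 3 with e
    grind [vertexType]

theorem summary_forget (i : Fin (k + 1)) (α : List Bool → Ann) :
    (forget i τ).summary k α = Summary.forget i (τ.summary k fun p => α (false :: p)) := by
  ext1
  · funext m
    simp only [summary, Summary.forget, chi, Fin.ext_iff]
    split_ifs
    · rfl
    · simp [Function.comp_def, vertexType_forget]
  · simp only [summary, Summary.forget, uncoloredVertices_forget, Set.image_image,
      vertexType_forget, Set.image_union, Option.map_eq_some_iff]
    rfl
  · exact edgeTypes_forget i α

theorem summary_plus (hd : Disjoint τ₁.activeColors τ₂.activeColors) (α : List Bool → Ann) :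
    (plus τ₁ τ₂).summary k α =
      (τ₁.summary k fun p => α (false :: p)).plus (τ₂.summary k fun p => α (true :: p)) := by
  ext1
  · funext m
    simp only [summary, Summary.plus, chi]
    cases τ₁.chi m <;>
      simp [Function.comp_def, vertexType_plus_false_cons, vertexType_plus_true_cons]
  · simp only [summary, Summary.plus, uncoloredVertices_plus hd, Set.image_union, Set.image_image,
      vertexType_plus_false_cons, vertexType_plus_true_cons]
  · exact edgeTypes_plus α

end STT

/-! ### The summary automaton -/

namespace BUTA

variable {Λ : Type} {B : BUTA Λ} {l : Λ} {t t₁ t₂ : BTree Λ} {s : B.State}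

theorem runs_leaf_iff : B.Runs (.leaf l) s ↔ B.leafT l s :=
  ⟨fun | .leaf h => h, .leaf⟩

theorem runs_unary_iff : B.Runs (.unary l t) s ↔ ∃ s', B.Runs t s' ∧ B.unaryT l s' s :=
  ⟨fun | .unary h h' => ⟨_, h', h⟩, fun ⟨_, h', h⟩ => .unary h h'⟩

theorem runs_binary_iff :
    B.Runs (.binary l t₁ t₂) s ↔
      ∃ s₁ s₂, B.Runs t₁ s₁ ∧ B.Runs t₂ s₂ ∧ B.binaryT l s₁ s₂ s :=
  ⟨fun | .binary h h₁ h₂ => ⟨_, _, h₁, h₂, h⟩, fun ⟨_, _, h₁, h₂, h⟩ => .binary h h₁ h₂⟩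

end BUTA

/-- The automaton that guesses an annotation of the vertices of a `k`-STT, allowing `x` at a vertex
labeled `a` if `guess a x`, computes the summary of the annotated term, and accepts according to
`accept` applied to the sets of vertex types and of edge types. -/
noncomputable def summaryAutomaton {Vl El Ann : Type} [Fintype El] [Fintype Ann] (k : ℕ)
    (guess : Vl → Ann → Prop)
    (accept : Set (VertexType El Ann) → Set (El × Ann × Ann) → Prop) :
    BUTA (STTLabel Vl El) where
  State := Summary El Ann k
  stFintype := inferInstance
  leafT l s := ∃ (i : Fin (k + 1)) (a : Vl) (x : Ann),
    l = .atom i a ∧ guess a x ∧ s = Summary.atom i x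
  unaryT l s s' :=
    (∃ (γ : El) (i j : Fin (k + 1)), l = .add γ i j ∧ s' = s.add γ i j) ∨
    (∃ i : Fin (k + 1), l = .forget i ∧ s' = s.forget i)
  binaryT l s₁ s₂ s := l = .plus ∧ s = s₁.plus s₂
  accept s := accept s.vertexTypes s.edges

namespace STT

variable {Vl El Ann : Type} {k : ℕ} {τ τ₁ τ₂ : STT Vl El}

/-- The annotation `α` of the vertices of `τ` is allowed by the vertex labels, according to
`guess`. -/
def IsAnnotation (guess : Vl → Ann → Prop) (τ : STT Vl El) (α : List Bool → Ann) : Prop :=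
  ∀ v a, τ.vlabel v = some a → guess a (α v)

/-- `s` is the summary of `τ` under some annotation allowed by `guess`. -/
def IsSummary (guess : Vl → Ann → Prop) (τ : STT Vl El) (s : Summary El Ann k) : Prop :=
  ∃ α, IsAnnotation guess τ α ∧ τ.summary k α = s

variable {guess : Vl → Ann → Prop} {s : Summary El Ann k}

theorem isAnnotation_plus {α : List Bool → Ann} :
    IsAnnotation guess (plus τ₁ τ₂) α ↔
      IsAnnotation guess τ₁ (fun p => α (false :: p)) ∧
        IsAnnotation guess τ₂ (fun p => α (true :: p)) := by
  refine ⟨fun h => ⟨fun v => h (false :: v), fun v => h (true :: v)⟩, fun ⟨h₁, h₂⟩ v a hv => ?_⟩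
  rcases v with _ | ⟨_ | _, v⟩
  · simp [vlabel] at hv
  · exact h₁ v a hv
  · exact h₂ v a hv

theorem isAnnotation_add {γ : El} {i j : ℕ} {α : List Bool → Ann} :
    IsAnnotation guess (add γ i j τ) α ↔ IsAnnotation guess τ (fun p => α (false :: p)) := by
  refine ⟨fun h v => h (false :: v), fun h v a hv => ?_⟩
  rcases v with _ | ⟨_ | _, v⟩ <;> simp only [vlabel, reduceCtorEq] at hv
  exact h v a hv

theorem isAnnotation_forget {i : ℕ} {α : List Bool → Ann} :
    IsAnnotation guess (forget i τ) α ↔ IsAnnotation guess τ (fun p => α (false :: p)) := by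
  refine ⟨fun h v => h (false :: v), fun h v a hv => ?_⟩
  rcases v with _ | ⟨_ | _, v⟩ <;> simp only [vlabel, reduceCtorEq] at hv
  exact h v a hv

theorem isSummary_atom (i : Fin (k + 1)) (a : Vl) :
    IsSummary guess (atom i a : STT Vl El) s ↔ ∃ x, guess a x ∧ s = Summary.atom i x := by
  constructor
  · rintro ⟨α, hα, rfl⟩
    exact ⟨α [], hα [] a rfl, summary_atom i a α⟩
  · rintro ⟨x, hx, rfl⟩
    refine ⟨fun _ => x, fun v b hv => ?_, summary_atom i a _⟩
    cases v <;> simp_all [vlabel]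

theorem isSummary_add (γ : El) (i j : Fin (k + 1)) :
    IsSummary guess (add γ i j τ) s ↔ ∃ s', IsSummary guess τ s' ∧ s = s'.add γ i j := by
  constructor
  · rintro ⟨α, hα, rfl⟩
    exact ⟨_, ⟨_, isAnnotation_add.1 hα, rfl⟩, summary_add γ i j α⟩
  · rintro ⟨_, ⟨α, hα, rfl⟩, rfl⟩
    exact ⟨fun p => α p.tail, isAnnotation_add.2 hα, summary_add γ i j _⟩

theorem isSummary_forget (i : Fin (k + 1)) :
    IsSummary guess (forget i τ) s ↔ ∃ s', IsSummary guess τ s' ∧ s = s'.forget i := by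
  constructor
  · rintro ⟨α, hα, rfl⟩
    exact ⟨_, ⟨_, isAnnotation_forget.1 hα, rfl⟩, summary_forget i α⟩
  · rintro ⟨_, ⟨α, hα, rfl⟩, rfl⟩
    exact ⟨fun p => α p.tail, isAnnotation_forget.2 hα, summary_forget i _⟩

theorem isSummary_plus (hd : Disjoint τ₁.activeColors τ₂.activeColors) :
    IsSummary guess (plus τ₁ τ₂) s ↔
      ∃ s₁ s₂, IsSummary guess τ₁ s₁ ∧ IsSummary guess τ₂ s₂ ∧ s = s₁.plus s₂ := by
  constructor
  · rintro ⟨α, hα, rfl⟩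
    obtain ⟨hα₁, hα₂⟩ := isAnnotation_plus.1 hα
    exact ⟨_, _, ⟨_, hα₁, rfl⟩, ⟨_, hα₂, rfl⟩, summary_plus hd α⟩
  · rintro ⟨_, _, ⟨α₁, hα₁, rfl⟩, ⟨α₂, hα₂, rfl⟩, rfl⟩
    exact ⟨fun p => if p.head? = some true then α₂ p.tail else α₁ p.tail,
      isAnnotation_plus.2 ⟨hα₁, hα₂⟩, summary_plus hd _⟩

variable [Fintype El] [Fintype Ann]
  {accept : Set (VertexType El Ann) → Set (El × Ann × Ann) → Prop}

theorem runs_summaryAutomaton_iff (hτ : τ.Valid k) :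
    (summaryAutomaton k guess accept).Runs τ.toTree s ↔ IsSummary guess τ s := by
  induction τ generalizing s with
  | atom i a =>
    lift i to Fin (k + 1) using Nat.lt_succ_of_le hτ.2
    refine BUTA.runs_leaf_iff.trans (Iff.trans ?_ (isSummary_atom i a).symm)
    simp [summaryAutomaton, Fin.val_inj]
  | add γ i j τ ih =>
    obtain ⟨-, hi, -, hj, hτ⟩ := hτ
    lift i to Fin (k + 1) using Nat.lt_succ_of_le hi
    lift j to Fin (k + 1) using Nat.lt_succ_of_le hj
    rw [isSummary_add]
    refine BUTA.runs_unary_iff.trans (exists_congr fun s' => and_congr (ih hτ) ?_)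
    simp [summaryAutomaton, Fin.val_inj]
  | forget i τ ih =>
    obtain ⟨-, hi, hτ⟩ := hτ
    lift i to Fin (k + 1) using Nat.lt_succ_of_le hi
    rw [isSummary_forget]
    refine BUTA.runs_unary_iff.trans (exists_congr fun s' => and_congr (ih hτ) ?_)
    simp [summaryAutomaton, Fin.val_inj]
  | plus τ₁ τ₂ ih₁ ih₂ =>
    obtain ⟨hτ₁, hτ₂, hd⟩ := hτ
    rw [isSummary_plus hd]
    refine BUTA.runs_binary_iff.trans
      (exists₂_congr fun s₁ s₂ => and_congr (ih₁ hτ₁) (and_congr (ih₂ hτ₂) ?_))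
    simp [summaryAutomaton]

theorem accepts_summaryAutomaton_iff (hτ : τ.Valid k) :
    (summaryAutomaton k guess accept).Accepts τ.toTree ↔
      ∃ α, IsAnnotation guess τ α ∧
        accept (vertexType τ.edgeRel α '' τ.vertices) (edgeTypes τ.edgeRel α) := by
  constructor
  · rintro ⟨s, hs, hacc⟩
    obtain ⟨α, hα, rfl⟩ := (runs_summaryAutomaton_iff hτ).1 hs
    exact ⟨α, hα, vertexTypes_summary (k := k) α ▸ hacc⟩
  · rintro ⟨α, hα, hacc⟩
    refine ⟨τ.summary k α, (runs_summaryAutomaton_iff hτ).2 ⟨α, hα, rfl⟩, ?_⟩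
    change accept (τ.summary k α).vertexTypes (edgeTypes τ.edgeRel α)
    rwa [vertexTypes_summary]

end STT

/-! ### Local structure of CBM graphs -/

section LocalStructure

variable {D V : Type}

/-- The part of the CBM axioms on which the semantics of a CPDS depends: process predecessors are
unique, and an event is an end of at most one matching edge. -/
structure IsLocallyCBM (edge : Option D → V → V → Prop) : Prop where
  pred_unique {u v w : V} : edge none u w → edge none v w → u = v
  write_unique {d d' : D} {u v v' : V} :
    edge (some d) u v → edge (some d') u v' → d = d' ∧ v = v'
  read_unique {d d' : D} {u u' v : V} :
    edge (some d) u v → edge (some d') u' v → d = d' ∧ u = u'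
  not_write_of_read {d d' : D} {u v w : V} : edge (some d) u v → ¬ edge (some d') v w

theorem IsCBMGraph.pred_unique {A : Architecture} {Alph : Type} {dom : Set V}
    {lab : V → Option (Alph × A.Procs)} {edge : Option A.DS → V → V → Prop}
    (h : IsCBMGraph A Alph dom lab edge) {u v w : V} (huw : edge none u w)
    (hvw : edge none v w) : u = v := by
  obtain ⟨-, hdom, hlist, hproc, -⟩ := h
  obtain ⟨a, c, p, hu, hw⟩ := hproc u w huw
  obtain ⟨b, c', q, hv, hw'⟩ := hproc v w hvw
  obtain rfl : p = q := by simp_all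
  obtain ⟨l, hnodup, hmem, hsucc⟩ := hlist p
  have hul : u ∈ l := (hmem u).2 ⟨(hdom _ _ _ huw).1, a, hu⟩
  have hvl : v ∈ l := (hmem v).2 ⟨(hdom _ _ _ hvw).1, b, hv⟩
  have hwl : w ∈ l := (hmem w).2 ⟨(hdom _ _ _ huw).2, c, hw⟩
  obtain ⟨m, hmu, hmw⟩ := (hsucc u w hul hwl).1 huw
  obtain ⟨n, hnv, hnw⟩ := (hsucc v w hvl hwl).1 hvw
  obtain ⟨hlt, -⟩ := List.getElem?_eq_some_iff.1 hmw
  obtain rfl : m = n := Nat.succ_injective ((List.getElem?_inj hlt hnodup).1 (hmw.trans hnw.symm))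
  exact Option.some_injective _ (hmu.symm.trans hnv)

theorem IsCBMGraph.isLocallyCBM {A : Architecture} {Alph : Type} {dom : Set V}
    {lab : V → Option (Alph × A.Procs)} {edge : Option A.DS → V → V → Prop}
    (h : IsCBMGraph A Alph dom lab edge) : IsLocallyCBM edge := by
  have hpred : ∀ {u v w : V}, edge none u w → edge none v w → u = v := h.pred_unique
  obtain ⟨-, -, -, -, -, hdisj, hacyc, -⟩ := h
  refine ⟨hpred, fun h h' => ?_, fun h h' => ?_, fun {d d' u v w} h h' => ?_⟩
  · by_contra hne
    exact (hdisj _ _ _ _ _ _ h h' fun ⟨hd, _, hv⟩ => hne ⟨hd, hv⟩).1 rfl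
  · by_contra hne
    exact (hdisj _ _ _ _ _ _ h h' fun ⟨hd, hu, _⟩ => hne ⟨hd, hu⟩).2.2.2 rfl
  · have hne : u ≠ v := by
      rintro rfl
      exact hacyc u (.single ⟨_, h⟩)
    exact (hdisj _ _ _ _ _ _ h h' fun ⟨_, huv, _⟩ => hne huv).2.2.1 rfl

end LocalStructure

/-! ### Runs as annotations by transitions -/

/-- The effect of a transition on the data structures. -/
inductive DSAction (D W : Type) : Type
  | internal
  | write (d : D) (w : W)
  | read (d : D) (w : W)
deriving Fintype

theorem IsLocallyCBM.exists_action {D V W : Type} {edge : Option D → V → V → Prop}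
    (h : IsLocallyCBM edge) (val : D → V → V → W) :
    ∃ act : V → DSAction D W,
      (∀ d u v, edge (some d) u v →
        act u = .write d (val d u v) ∧ act v = .read d (val d u v)) ∧
      ∀ v, (¬ ∃ d w, edge (some d) v w ∨ edge (some d) w v) → act v = .internal := by
  have pointwise (v : V) : ∃ x : DSAction D W,
      (∀ d w, edge (some d) v w → x = .write d (val d v w)) ∧
      (∀ d u, edge (some d) u v → x = .read d (val d u v)) ∧
      ((¬ ∃ d w, edge (some d) v w ∨ edge (some d) w v) → x = .internal) := by
    by_cases hw : ∃ d w, edge (some d) v w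
    · obtain ⟨d, w, hvw⟩ := hw
      refine ⟨.write d (val d v w), fun d' w' h' => ?_,
        fun d' u h' => (h.not_write_of_read h' hvw).elim, fun hn => (hn ⟨d, w, .inl hvw⟩).elim⟩
      obtain ⟨rfl, rfl⟩ := h.write_unique hvw h'
      rfl
    · by_cases hr : ∃ d u, edge (some d) u v
      · obtain ⟨d, u, huv⟩ := hr
        refine ⟨.read d (val d u v), fun d' w h' => (hw ⟨d', w, h'⟩).elim, fun d' u' h' => ?_,
          fun hn => (hn ⟨d, u, .inr huv⟩).elim⟩
        obtain ⟨rfl, rfl⟩ := h.read_unique huv h'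
        rfl
      · exact ⟨.internal, fun d w h' => (hw ⟨d, w, h'⟩).elim,
          fun d u h' => (hr ⟨d, u, h'⟩).elim, fun _ => rfl⟩
  choose act hwrite hread hinternal using pointwise
  exact ⟨act, fun d u v huv => ⟨hwrite u d v huv, hread v d u huv⟩, hinternal⟩

namespace CPDS

attribute [instance] locsFintype valFintype valNonempty

variable {A : Architecture} {Alph V : Type} {S : CPDS A Alph}

/-- A transition of `S`, without the letter it reads. -/
structure Transition (S : CPDS A Alph) : Type where
  proc : A.Procs
  source : S.Locs
  action : DSAction A.DS S.Val
  target : S.Locs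

noncomputable instance (S : CPDS A Alph) : Fintype S.Transition :=
  .ofInjective (fun t => (t.proc, t.source, t.action, t.target))
    fun ⟨_, _, _, _⟩ ⟨_, _, _, _⟩ h => by simpa using h

/-- `S` has the transition `t` on the letter and process `x`. -/
def Enabled (S : CPDS A Alph) (x : Alph × A.Procs) (t : S.Transition) : Prop :=
  t.proc = x.2 ∧
    match t.action with
    | .internal => S.internal x.2 t.source x.1 t.target
    | .write d w => S.write x.2 t.source x.1 d w t.target
    | .read d w => S.read x.2 t.source x.1 d w t.target

/-- An annotation by transitions with vertex types `P` and edge types `E` is an accepting run,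
provided that the transitions are enabled. -/
structure AcceptsTypes (S : CPDS A Alph) (P : Set (VertexType (Option A.DS) S.Transition))
    (E : Set (Option A.DS × S.Transition × S.Transition)) : Prop where
  source_eq_init : ∀ t ∈ P, none ∉ t.inc → t.ann.source = S.init
  source_eq_target : ∀ x y, (none, x, y) ∈ E → y.source = x.target
  internal_of_unmatched :
    ∀ t ∈ P, (∀ d, some d ∉ t.out ∧ some d ∉ t.inc) → t.ann.action = .internal
  matched : ∀ d x y, (some d, x, y) ∈ E → ∃ w, x.action = .write d w ∧ y.action = .read d w
  final : ∃ fin ∈ S.finals, ∀ p,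
    ((∀ t ∈ P, t.ann.proc ≠ p) → fin p = S.init) ∧
      ∀ t ∈ P, t.ann.proc = p → none ∉ t.out → fin p = t.ann.target

theorem exists_graphPrev (S : CPDS A Alph) (dom : Set V) (edge : Option A.DS → V → V → Prop)
    (ρ : V → S.Locs) (v : V) : ∃ ℓ, S.GraphPrev dom edge ρ v ℓ := by
  by_cases h : ∃ u, u ∈ dom ∧ edge none u v
  · obtain ⟨u, hu, huv⟩ := h
    exact ⟨ρ u, .inl ⟨u, hu, huv, rfl⟩⟩
  · exact ⟨S.init, .inr ⟨h, rfl⟩⟩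

theorem GraphPrev.unique {dom : Set V} {edge : Option A.DS → V → V → Prop}
    (hedge : IsLocallyCBM edge) {ρ : V → S.Locs} {v : V} {ℓ ℓ' : S.Locs}
    (h : S.GraphPrev dom edge ρ v ℓ) (h' : S.GraphPrev dom edge ρ v ℓ') : ℓ = ℓ' := by
  obtain ⟨u, hu, huv, rfl⟩ | ⟨hnone, rfl⟩ := h <;> obtain ⟨u', hu', huv', rfl⟩ | ⟨hnone', rfl⟩ := h'
  · rw [hedge.pred_unique huv huv']
  · exact (hnone' ⟨u, hu, huv⟩).elim
  · exact (hnone ⟨u', hu', huv'⟩).elim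
  · rfl

variable {dom : Set V} {lab : V → Option (Alph × A.Procs)} {edge : Option A.DS → V → V → Prop}
  {α : V → S.Transition}

theorem AcceptsTypes.graphPrev (h : S.AcceptsTypes (vertexType edge α '' dom) (edgeTypes edge α))
    (hedge : ∀ γ u v, edge γ u v → u ∈ dom ∧ v ∈ dom) {v : V} (hv : v ∈ dom) :
    S.GraphPrev dom edge (fun u => (α u).target) v (α v).source := by
  by_cases hpred : ∃ u, edge none u v
  · obtain ⟨u, huv⟩ := hpred
    exact .inl ⟨u, (hedge _ _ _ huv).1, huv, h.source_eq_target _ _ (mk_mem_edgeTypes α huv)⟩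
  · exact .inr ⟨fun ⟨u, _, huv⟩ => hpred ⟨u, huv⟩, h.source_eq_init _ ⟨v, hv, rfl⟩ hpred⟩

theorem AcceptsTypes.graphAccepts
    (h : S.AcceptsTypes (vertexType edge α '' dom) (edgeTypes edge α))
    (hlab : ∀ v ∈ dom, ∃ x, lab v = some x) (hedge : ∀ γ u v, edge γ u v → u ∈ dom ∧ v ∈ dom)
    (hα : ∀ v x, lab v = some x → S.Enabled x (α v)) : S.GraphAccepts dom lab edge := by
  have proc_eq {v : V} (hv : v ∈ dom) : ∃ a, lab v = some (a, (α v).proc) := by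
    obtain ⟨⟨a, p⟩, hx⟩ := hlab v hv
    obtain rfl : (α v).proc = p := (hα v _ hx).1
    exact ⟨a, hx⟩
  refine ⟨fun v => (α v).target, fun v hv hunmatched => ?_, fun d u v huv => ?_, ?_⟩
  · obtain ⟨⟨a, p⟩, hx⟩ := hlab v hv
    have hact : (α v).action = .internal := h.internal_of_unmatched _ ⟨v, hv, rfl⟩ fun d =>
      ⟨fun ⟨w, hvw⟩ => hunmatched ⟨d, w, .inl hvw⟩, fun ⟨w, hwv⟩ => hunmatched ⟨d, w, .inr hwv⟩⟩
    have henabled := (hα v _ hx).2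
    rw [hact] at henabled
    exact ⟨a, p, _, hx, h.graphPrev hedge hv, henabled⟩
  · obtain ⟨hu, hv⟩ := hedge _ _ _ huv
    obtain ⟨⟨a, p⟩, hxu⟩ := hlab u hu
    obtain ⟨⟨b, q⟩, hxv⟩ := hlab v hv
    obtain ⟨w, hactu, hactv⟩ := h.matched _ _ _ (mk_mem_edgeTypes α huv)
    have hwrite := (hα u _ hxu).2
    have hread := (hα v _ hxv).2
    rw [hactu] at hwrite
    rw [hactv] at hread
    obtain rfl : A.Writer d = p := S.write_writer _ _ _ _ _ _ hwrite
    obtain rfl : A.Reader d = q := S.read_reader _ _ _ _ _ _ hread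
    exact ⟨w, a, b, _, _, hxu, hxv, h.graphPrev hedge hu, h.graphPrev hedge hv, hwrite, hread⟩
  · obtain ⟨fin, hfin, hlast⟩ := h.final
    refine ⟨fin, hfin, fun p => ⟨fun hempty => (hlast p).1 ?_, fun v hv ⟨a, hx⟩ hmax => ?_⟩⟩
    · rintro _ ⟨v, hv, rfl⟩ rfl
      exact hempty ⟨v, hv, proc_eq hv⟩
    · exact (hlast p).2 _ ⟨v, hv, rfl⟩ (hα v _ hx).1
        fun ⟨w, hvw⟩ => hmax ⟨w, (hedge _ _ _ hvw).2, hvw⟩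

theorem exists_enabled_action (hcbm : IsLocallyCBM edge) {prev ρ : V → S.Locs}
    (hunmatched : ∀ v x, lab v = some x → (¬ ∃ d w, edge (some d) v w ∨ edge (some d) w v) →
      S.internal x.2 (prev v) x.1 (ρ v))
    (hmatched : ∀ d u v, edge (some d) u v → ∃ w,
      (∀ x, lab u = some x → S.write x.2 (prev u) x.1 d w (ρ u)) ∧
        ∀ x, lab v = some x → S.read x.2 (prev v) x.1 d w (ρ v)) :
    ∃ act : V → DSAction A.DS S.Val,
      (∀ v x, lab v = some x → S.Enabled x ⟨x.2, prev v, act v, ρ v⟩) ∧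
      (∀ d u v, edge (some d) u v → ∃ w, act u = .write d w ∧ act v = .read d w) ∧
      ∀ v, (¬ ∃ d w, edge (some d) v w ∨ edge (some d) w v) → act v = .internal := by
  choose! val hwrite hread using hmatched
  obtain ⟨act, hact, hinternal⟩ := hcbm.exists_action val
  refine ⟨act, fun v x hx => ⟨rfl, ?_⟩, fun d u v huv => ⟨_, hact d u v huv⟩, hinternal⟩
  by_cases hv : ∃ d w, edge (some d) v w ∨ edge (some d) w v
  · obtain ⟨d, w, hvw | hwv⟩ := hv
    · rw [(hact d v w hvw).1]
      exact hwrite d v w hvw x hx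
    · rw [(hact d w v hwv).2]
      exact hread d w v hwv x hx
  · rw [hinternal v hv]
    exact hunmatched v x hx hv

theorem acceptsTypes_of_graphPrev (hcbm : IsLocallyCBM edge)
    (hedge : ∀ γ u v, edge γ u v → u ∈ dom ∧ v ∈ dom)
    (hprev : ∀ v ∈ dom, S.GraphPrev dom edge (fun u => (α u).target) v (α v).source)
    (hmatched : ∀ d u v, edge (some d) u v →
      ∃ w, (α u).action = .write d w ∧ (α v).action = .read d w)
    (hunmatched : ∀ v ∈ dom, (¬ ∃ d w, edge (some d) v w ∨ edge (some d) w v) →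
      (α v).action = .internal)
    (hfinal : ∃ fin ∈ S.finals, ∀ p,
      ((∀ v ∈ dom, (α v).proc ≠ p) → fin p = S.init) ∧
        ∀ v ∈ dom, (α v).proc = p → (¬ ∃ w, edge none v w) → fin p = (α v).target) :
    S.AcceptsTypes (vertexType edge α '' dom) (edgeTypes edge α) where
  source_eq_init := by
    rintro _ ⟨v, hv, rfl⟩ hmin
    exact (hprev v hv).unique hcbm (.inr ⟨fun ⟨u, _, huv⟩ => hmin ⟨u, huv⟩, rfl⟩)
  source_eq_target := by
    rintro _ _ ⟨u, v, huv, rfl, rfl⟩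
    obtain ⟨hu, hv⟩ := hedge _ _ _ huv
    exact (hprev v hv).unique hcbm (.inl ⟨u, hu, huv, rfl⟩)
  internal_of_unmatched := by
    rintro _ ⟨v, hv, rfl⟩ hout
    refine hunmatched v hv ?_
    rintro ⟨d, w, hvw | hwv⟩
    · exact (hout d).1 ⟨w, hvw⟩
    · exact (hout d).2 ⟨w, hwv⟩
  matched := by
    rintro d _ _ ⟨u, v, huv, rfl, rfl⟩
    exact hmatched d u v huv
  final := by simpa only [Set.forall_mem_image] using! hfinal

theorem GraphAccepts.exists_acceptsTypes (h : S.GraphAccepts dom lab edge)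
    (hcbm : IsLocallyCBM edge) (hne : dom.Nonempty) (hdom : ∀ v, v ∈ dom ↔ ∃ x, lab v = some x)
    (hedge : ∀ γ u v, edge γ u v → u ∈ dom ∧ v ∈ dom) :
    ∃ α : V → S.Transition, (∀ v x, lab v = some x → S.Enabled x (α v)) ∧
      S.AcceptsTypes (vertexType edge α '' dom) (edgeTypes edge α) := by
  obtain ⟨ρ, hinternal, hmatched, fin, hfin, hlast⟩ := h
  choose prev hprev using S.exists_graphPrev dom edge ρ
  have prev_eq {v : V} {ℓ : S.Locs} (hℓ : S.GraphPrev dom edge ρ v ℓ) : ℓ = prev v :=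
    hℓ.unique hcbm (hprev v)
  obtain ⟨act, henabled, hact, hact_internal⟩ :=
    exists_enabled_action (S := S) (lab := lab) (prev := prev) (ρ := ρ) hcbm
      (fun v x hx hv => by
        obtain ⟨a, p, ℓ, hxv, hℓ, hstep⟩ := hinternal v ((hdom v).2 ⟨x, hx⟩) hv
        obtain rfl : (a, p) = x := Option.some_injective _ (hxv.symm.trans hx)
        exact prev_eq hℓ ▸ hstep)
      (fun d u v huv => by
        obtain ⟨w, a, b, ℓu, ℓv, hxu, hxv, hℓu, hℓv, hwrite, hread⟩ := hmatched d u v huv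
        simp only [hxu, hxv, Option.some.injEq, forall_eq']
        exact ⟨w, prev_eq hℓu ▸ hwrite, prev_eq hℓv ▸ hread⟩)
  obtain ⟨v₀, hv₀⟩ := hne
  obtain ⟨x₀, -⟩ := (hdom v₀).1 hv₀
  refine ⟨fun v => ⟨((lab v).getD x₀).2, prev v, act v, ρ v⟩,
    fun v x hx => by simpa [hx] using henabled v x hx,
    acceptsTypes_of_graphPrev hcbm hedge (fun v _ => hprev v) hact (fun v _ => hact_internal v)
      ⟨fin, hfin, fun p => ⟨fun hempty => (hlast p).1 ?_, ?_⟩⟩⟩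
  · rintro ⟨v, hv, a, hx⟩
    exact hempty v hv (by simp [hx])
  · rintro v hv rfl hmax
    obtain ⟨⟨a, p⟩, hx⟩ := (hdom v).1 hv
    exact (hlast _).2 v hv ⟨a, by simp [hx]⟩ fun ⟨w, _, hvw⟩ => hmax ⟨w, hvw⟩

theorem graphAccepts_iff_exists_acceptsTypes (hcbm : IsLocallyCBM edge) (hne : dom.Nonempty)
    (hdom : ∀ v, v ∈ dom ↔ ∃ x, lab v = some x)
    (hedge : ∀ γ u v, edge γ u v → u ∈ dom ∧ v ∈ dom) :
    S.GraphAccepts dom lab edge ↔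
      ∃ α : V → S.Transition, (∀ v x, lab v = some x → S.Enabled x (α v)) ∧
        S.AcceptsTypes (vertexType edge α '' dom) (edgeTypes edge α) :=
  ⟨fun h => h.exists_acceptsTypes hcbm hne hdom hedge,
    fun ⟨_, hα, h⟩ => h.graphAccepts (fun v => (hdom v).1) hedge hα⟩

end CPDS

theorem cpds_stt_automaton_general (A : Architecture) (Alph : Type) (S : CPDS A Alph) (k : ℕ) :
    ∃ Aut : BUTA (STTLabel (Alph × A.Procs) (Option A.DS)),
      ∀ τ : STT (Alph × A.Procs) (Option A.DS), τ.Valid k → IsLocallyCBM τ.edgeRel →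
        (Aut.Accepts τ.toTree ↔ S.GraphAccepts τ.vertices τ.vlabel τ.edgeRel) := by
  refine ⟨summaryAutomaton k S.Enabled S.AcceptsTypes, fun τ hτ hcbm => ?_⟩
  exact (STT.accepts_summaryAutomaton_iff hτ).trans
    (CPDS.graphAccepts_iff_exists_acceptsTypes hcbm τ.vertices_nonempty
      (fun _ => Option.isSome_iff_exists) fun _ _ _ => STT.mem_vertices_of_edgeRel).symm

/-- Given an architecture `A`, alphabet `Alph`, a CPDS `S`
over `(A, Alph)`, and `k ≥ 1`, one can construct a tree automaton such that for
every valid `k`-STT `τ` with empty coloring domain whose graph `G_τ` is a CBM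
over `(A, Alph)`: the automaton accepts (the tree of) `τ` iff `G_τ ∈ L(S)`. -/
theorem cpds_stt_automaton (A : Architecture) (Alph : Type) [Fintype Alph]
    (S : CPDS A Alph) (k : ℕ) (hk : 1 ≤ k) :
    ∃ Aut : BUTA (STTLabel (Alph × A.Procs) (Option A.DS)),
      ∀ τ : STT (Alph × A.Procs) (Option A.DS),
        τ.Valid k → (∀ i, τ.chi i = none) →
        IsCBMGraph A Alph τ.vertices τ.vlabel τ.edgeRel →
        (Aut.Accepts τ.toTree ↔ S.GraphAccepts τ.vertices τ.vlabel τ.edgeRel) := by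
  obtain ⟨Aut, hAut⟩ := cpds_stt_automaton_general A Alph S k
  exact ⟨Aut, fun τ hτ _ hG => hAut τ hτ hG.isLocallyCBM⟩
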